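/- Let G = (V,E) be a finite connected undirected graph and let b : V × V → ℝ be a feasible solution of the one-leg linear program (LR_OL) on G (one-leg feasible and normalized). Let d' be the shortest-path closure of b. Then d' is a feasible solution of the full metric linear program (LR) on G, satisfies d'(i,j) ≥ b(i,j) for all i,j ∈ V, satisfies d'(i,j) = b(i,j) for all edges (i,j) ∈ E, and has the same objective value: Σ_{(i,j)∈E} d'(i,j) = Σ_{(i,j)∈E} b(i,j). -/

import Mathlib

/-!
The one-leg triangle inequality, applied to the first edge of a walk, gives by induction on the
walk that `b i j` is at most the weight of every walk from `i` to `j` (`le_walkWeight`). Hence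
the closure `d'` dominates `b`, which yields nonnegativity and the normalization of `d'`. On an
edge the one-step walk has weight `b i j`, so `d' = b` there and the objectives agree. Symmetry
and the full triangle inequality of `d'` come from reversing and concatenating walks.
-/

open SimpleGraph

/-- The `b`-weight of a walk: the sum of `b u v` over consecutive vertices `(u, v)`. -/
def walkWeight {V : Type*} {G : SimpleGraph V} (b : V → V → ℝ) {i j : V}
    (p : G.Walk i j) : ℝ :=
  (p.darts.map fun d => b d.toProd.1 d.toProd.2).sum

/-- `b` is one-leg feasible on `G`: nonnegative, symmetric, zero on the diagonal, and
satisfying the triangle inequality for all distinct `i j k` with `(i,k)` an edge. -/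
def OneLegFeasible {V : Type*} (G : SimpleGraph V) (b : V → V → ℝ) : Prop :=
  (∀ i j, 0 ≤ b i j) ∧ (∀ i j, b i j = b j i) ∧ (∀ i, b i i = 0) ∧
    ∀ i j k, i ≠ j → j ≠ k → i ≠ k → G.Adj i k → b i j ≤ b i k + b k j

open scoped Classical in
/-- The shortest-path closure of `b` on `G`: the infimum of the `b`-weights of walks
from `i` to `j`, with value `0` on the diagonal. -/
noncomputable def spClosure {V : Type*} (G : SimpleGraph V) (b : V → V → ℝ)
    (i j : V) : ℝ :=
  if i = j then 0 else sInf {x | ∃ p : G.Walk i j, walkWeight b p = x}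

/-- `d` is feasible for the full metric linear program (LR) on `G`: nonnegative,
symmetric, zero on the diagonal, the triangle inequality for all distinct triples,
and the normalization `∑ i, ∑ j, d i j ≥ 1`. -/
def LRFeasible {V : Type*} [Fintype V] (G : SimpleGraph V) (d : V → V → ℝ) : Prop :=
  (∀ i j, 0 ≤ d i j) ∧ (∀ i j, d i j = d j i) ∧ (∀ i, d i i = 0) ∧
    (∀ i j k, i ≠ j → j ≠ k → i ≠ k → d i j ≤ d i k + d k j) ∧
    1 ≤ ∑ i, ∑ j, d i j

/-- `b` is feasible for the one-leg linear program (LR_OL) on `G`: as `LRFeasible`,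
but the triangle inequality is required only for distinct triples `i j k`
with `(i,k)` an edge of `G`. -/
def LROLFeasible {V : Type*} [Fintype V] (G : SimpleGraph V) (b : V → V → ℝ) : Prop :=
  (∀ i j, 0 ≤ b i j) ∧ (∀ i j, b i j = b j i) ∧ (∀ i, b i i = 0) ∧
    (∀ i j k, i ≠ j → j ≠ k → i ≠ k → G.Adj i k → b i j ≤ b i k + b k j) ∧
    1 ≤ ∑ i, ∑ j, b i j

open scoped Classical in
/-- The objective `∑_{(i,j) ∈ E} x i j`, with each undirected edge counted once
(equivalently, half the sum over all ordered adjacent pairs for symmetric `x`). -/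
noncomputable def edgeObjective {V : Type*} [Fintype V] (G : SimpleGraph V)
    (x : V → V → ℝ) : ℝ :=
  (∑ i, ∑ j, if G.Adj i j then x i j else 0) / 2

theorem walkWeight_cons {V : Type*} {G : SimpleGraph V} (b : V → V → ℝ) {i k j : V}
    (h : G.Adj i k) (p : G.Walk k j) :
    walkWeight b (Walk.cons h p) = b i k + walkWeight b p := by
  simp [walkWeight]

theorem walkWeight_append {V : Type*} {G : SimpleGraph V} (b : V → V → ℝ) {i k j : V}
    (p : G.Walk i k) (q : G.Walk k j) :
    walkWeight b (p.append q) = walkWeight b p + walkWeight b q := by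
  simp [walkWeight]

theorem walkWeight_reverse {V : Type*} {G : SimpleGraph V} {b : V → V → ℝ}
    (hsymm : ∀ i j, b i j = b j i) {i j : V} (p : G.Walk i j) :
    walkWeight b p.reverse = walkWeight b p := by
  induction p with
  | nil => rfl
  | @cons u v w h p ih =>
    rw [Walk.reverse_cons, walkWeight_append, ih, walkWeight_cons, walkWeight_cons, hsymm v u]
    simp [walkWeight, add_comm]

theorem walkWeight_nonneg {V : Type*} {G : SimpleGraph V} {b : V → V → ℝ}
    (h0 : ∀ i j, 0 ≤ b i j) {i j : V} (p : G.Walk i j) : 0 ≤ walkWeight b p := by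
  apply List.sum_nonneg
  simp only [List.mem_map]
  rintro _ ⟨d, -, rfl⟩
  exact h0 _ _

/-- Only the leg along the first edge of the walk is needed in each triangle inequality, so
one-leg feasibility suffices. -/
theorem le_walkWeight {V : Type*} {G : SimpleGraph V} {b : V → V → ℝ}
    (hb : OneLegFeasible G b) {i j : V} (p : G.Walk i j) : b i j ≤ walkWeight b p := by
  obtain ⟨h0, -, hdiag, htri⟩ := hb
  induction p with
  | nil => simp [walkWeight, hdiag]
  | @cons u v w h p ih =>
    have hp := walkWeight_nonneg h0 p
    have huv := h0 u v
    rw [walkWeight_cons]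
    -- The triangle inequality is available for distinct vertices only.
    by_cases huw : u = w
    · subst huw
      rw [hdiag]
      linarith
    by_cases hvw : w = v
    · subst hvw
      linarith
    linarith [htri u w v huw hvw h.ne h]

theorem spClosure_le_walkWeight {V : Type*} {G : SimpleGraph V} {b : V → V → ℝ}
    (h0 : ∀ i j, 0 ≤ b i j) {i j : V} (p : G.Walk i j) :
    spClosure G b i j ≤ walkWeight b p := by
  unfold spClosure
  split_ifs
  · exact walkWeight_nonneg h0 p
  · refine csInf_le ⟨0, ?_⟩ ⟨p, rfl⟩
    rintro _ ⟨q, rfl⟩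
    exact walkWeight_nonneg h0 q

theorem le_spClosure {V : Type*} {G : SimpleGraph V} (hconn : G.Connected) {b : V → V → ℝ}
    {i j : V} (hij : i ≠ j) {c : ℝ} (h : ∀ p : G.Walk i j, c ≤ walkWeight b p) :
    c ≤ spClosure G b i j := by
  rw [spClosure, if_neg hij]
  obtain ⟨p⟩ := hconn.preconnected i j
  refine le_csInf ⟨_, p, rfl⟩ ?_
  rintro _ ⟨q, rfl⟩
  exact h q

/-- **Shortest-path closure of an (LR_OL)-feasible solution.** If `b` is feasible for
the one-leg program on a finite connected graph `G`, then its shortest-path closure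
`d'` is feasible for the full program (LR), dominates `b` everywhere, agrees with `b`
on every edge, and has the same objective value. -/
theorem spClosure_of_LROL {V : Type*} [Fintype V] (G : SimpleGraph V)
    (hconn : G.Connected) (b : V → V → ℝ) (hb : LROLFeasible G b) :
    LRFeasible G (spClosure G b) ∧
    (∀ i j, b i j ≤ spClosure G b i j) ∧
    (∀ i j, G.Adj i j → spClosure G b i j = b i j) ∧
    edgeObjective G (spClosure G b) = edgeObjective G b := by
  obtain ⟨h0, hsymm, hdiag, htri, hsum⟩ := hb
  have hdiag' : ∀ i, spClosure G b i i = 0 := fun i => by simp [spClosure]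
  have hle : ∀ i j, b i j ≤ spClosure G b i j := by
    intro i j
    by_cases hij : i = j
    · subst hij
      rw [hdiag, hdiag']
    · exact le_spClosure hconn hij fun p => le_walkWeight ⟨h0, hsymm, hdiag, htri⟩ p
  have hedge : ∀ i j, G.Adj i j → spClosure G b i j = b i j := by
    intro i j h
    refine le_antisymm ?_ (hle i j)
    simpa [walkWeight] using spClosure_le_walkWeight h0 (Walk.cons h Walk.nil)
  have hsymm_le : ∀ i j, spClosure G b i j ≤ spClosure G b j i := by
    intro i j
    by_cases hij : i = j
    · rw [hij]
    · refine le_spClosure hconn (Ne.symm hij) fun p => ?_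
      rw [← walkWeight_reverse hsymm p]
      exact spClosure_le_walkWeight h0 _
  refine ⟨⟨fun i j => (h0 i j).trans (hle i j),
    fun i j => le_antisymm (hsymm_le i j) (hsymm_le j i), hdiag', ?_, ?_⟩, hle, hedge, ?_⟩
  · intro i j k _ hjk hik
    rw [← sub_le_iff_le_add]
    refine le_spClosure hconn hik fun p => ?_
    rw [sub_le_comm]
    refine le_spClosure hconn hjk.symm fun q => ?_
    rw [sub_le_iff_le_add', ← walkWeight_append]
    exact spClosure_le_walkWeight h0 _
  · exact hsum.trans (Finset.sum_le_sum fun i _ => Finset.sum_le_sum fun j _ => hle i j)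
  · unfold edgeObjective
    congr 1
    refine Finset.sum_congr rfl fun i _ => Finset.sum_congr rfl fun j _ => ?_
    split_ifs with h
    · exact hedge i j h
    · rfl
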